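/- Let G be a graph on n vertices with maximum degree Δ, let 0 < β < 1, and consider the Glauber dynamics on proper k-colorings of G with the Hamming metric ρ(X,Y) = |{v : X(v) ≠ Y(v)}|. Suppose the proper k-coloring X satisfies |A(X,v)| ≥ Δ/(1−β) for every vertex v. Then for every proper k-coloring Y, the pair (X,Y) is β/n distance-decreasing: there is a coupling of one step of the dynamics from X and from Y under which E[ρ(X₁,Y₁)] ≤ (1 − β/n)·ρ(X,Y). -/

import Mathlib

/-!
Couple the two chains by updating the same vertex `v` in both and by drawing the two new colors
from a maximal coupling of the uniform distributions on `A(X,v)` and `A(Y,v)`. Updating `v` removes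
the disagreement at `v`, if there is one, and creates a disagreement there with probability
`max |A(X,v) \ A(Y,v)| |A(Y,v) \ A(X,v)| / max |A(X,v)| |A(Y,v)| ≤ d(v) / |A(X,v)|`,
where `d(v)` counts the neighbors of `v` on which `X` and `Y` disagree. Summing over `v` and
exchanging the sums, a disagreement at `w` is charged `∑ 1 / |A(X,v)|` over the neighbors `v` of
`w`, which is at most `1 - β`.
-/

section

open Function Finset

section Pushforward

variable {α β γ : Type*} [Fintype α] [Fintype β] [Finite γ]

/-- The pushforward of a weight function on a finite type: the law of `f a` when `a` has law `μ`. -/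
noncomputable abbrev pushforward (f : α → γ) : (α → ℝ) →ₗ[ℝ] (γ → ℝ) :=
  FunOnFinite.linearMap ℝ ℝ f

lemma pushforward_apply [DecidableEq γ] (f : α → γ) (μ : α → ℝ) (c : γ) :
    pushforward f μ c = ∑ a with f a = c, μ a :=
  FunOnFinite.linearMap_apply_apply ℝ ℝ f μ c

lemma pushforward_pushforward (g : β → γ) (f : α → β) (μ : α → ℝ) :
    pushforward g (pushforward f μ) = pushforward (g ∘ f) μ := by
  simp only [pushforward, FunOnFinite.linearMap_comp, LinearMap.comp_apply]

lemma pushforward_nonneg (f : α → γ) {μ : α → ℝ} (hμ : 0 ≤ μ) : 0 ≤ pushforward f μ := by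
  classical
  intro c
  rw [pushforward_apply]
  exact sum_nonneg fun a _ ↦ hμ a

lemma sum_pushforward_mul (f : α → β) (μ : α → ℝ) (φ : β → ℝ) :
    ∑ b, pushforward f μ b * φ b = ∑ a, μ a * φ (f a) := by
  classical
  simp only [pushforward_apply, sum_mul]
  rw [← sum_fiberwise univ f]
  refine sum_congr rfl fun b _ ↦ sum_congr rfl fun a ha ↦ ?_
  rw [(mem_filter.mp ha).2]

lemma sum_pushforward (f : α → β) (μ : α → ℝ) : ∑ b, pushforward f μ b = ∑ a, μ a := by
  simpa only [mul_one] using sum_pushforward_mul f μ fun _ ↦ 1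

lemma pushforward_fst_apply (π : α × β → ℝ) (a : α) :
    pushforward Prod.fst π a = ∑ b, π (a, b) := by
  classical
  rw [pushforward_apply, sum_filter, Fintype.sum_prod_type_right]
  simp only [sum_ite_eq', mem_univ, if_true]

lemma pushforward_snd_apply (π : α × β → ℝ) (b : β) :
    pushforward Prod.snd π b = ∑ a, π (a, b) := by
  classical
  rw [pushforward_apply, sum_filter, Fintype.sum_prod_type]
  simp only [sum_ite_eq', mem_univ, if_true]

end Pushforward

section Coupling

variable {ι α β α' β' : Type*} [Fintype ι] [Fintype α] [Fintype β] [Fintype α'] [Fintype β']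

/-- `π` is a coupling of the weight functions `μ` and `ν` (probability vectors in the application):
a nonnegative weight function on pairs with marginals `μ` and `ν`. -/
structure IsCoupling (μ : α → ℝ) (ν : β → ℝ) (π : α × β → ℝ) : Prop where
  nonneg : 0 ≤ π
  fst : pushforward Prod.fst π = μ
  snd : pushforward Prod.snd π = ν

lemma IsCoupling.sum_eq {μ : α → ℝ} {ν : β → ℝ} {π : α × β → ℝ} (h : IsCoupling μ ν π) :
    ∑ p, π p = ∑ a, μ a := by
  rw [← h.fst, sum_pushforward]

lemma IsCoupling.map {μ : α → ℝ} {ν : β → ℝ} {π : α × β → ℝ} (h : IsCoupling μ ν π)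
    (f : α → α') (g : β → β') :
    IsCoupling (pushforward f μ) (pushforward g ν) (pushforward (Prod.map f g) π) where
  nonneg := pushforward_nonneg _ h.nonneg
  fst := by
    rw [← h.fst, pushforward_pushforward, pushforward_pushforward]
    rfl
  snd := by
    rw [← h.snd, pushforward_pushforward, pushforward_pushforward]
    rfl

lemma IsCoupling.smul {μ : α → ℝ} {ν : β → ℝ} {π : α × β → ℝ} (h : IsCoupling μ ν π)
    {t : ℝ} (ht : 0 ≤ t) : IsCoupling (t • μ) (t • ν) (t • π) where
  nonneg := smul_nonneg ht h.nonneg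
  fst := by rw [map_smul, h.fst]
  snd := by rw [map_smul, h.snd]

lemma IsCoupling.sum {μ : ι → α → ℝ} {ν : ι → β → ℝ} {π : ι → α × β → ℝ}
    (h : ∀ i, IsCoupling (μ i) (ν i) (π i)) :
    IsCoupling (∑ i, μ i) (∑ i, ν i) (∑ i, π i) where
  nonneg := sum_nonneg fun i _ ↦ (h i).nonneg
  fst := by simp only [map_sum, (h _).fst]
  snd := by simp only [map_sum, (h _).snd]

end Coupling

section MaximalCoupling

variable {α : Type*} [Fintype α] {μ ν : α → ℝ}

lemma sum_posPart_sub_comm (h : ∑ a, μ a = ∑ a, ν a) :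
    ∑ a, (μ a - ν a)⁺ = ∑ a, (ν a - μ a)⁺ := by
  have hparts (a : α) : (μ a - ν a)⁺ - (ν a - μ a)⁺ = μ a - ν a := by
    rw [← neg_sub (μ a) (ν a), posPart_neg, posPart_sub_negPart]
  rw [← sub_eq_zero, ← sum_sub_distrib, sum_congr rfl fun a _ ↦ hparts a, sum_sub_distrib,
    h, sub_self]

lemma sum_excess_mul_excess_div (h : ∑ a, μ a = ∑ a, ν a) (a : α) :
    ∑ b, (μ a - ν a)⁺ * (ν b - μ b)⁺ / ∑ c, (μ c - ν c)⁺ = (μ a - ν a)⁺ := by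
  rw [← sum_div, ← mul_sum, ← sum_posPart_sub_comm h]
  refine mul_div_cancel_of_imp fun hzero ↦ ?_
  exact (sum_eq_zero_iff_of_nonneg fun c _ ↦ posPart_nonneg (μ c - ν c)).mp hzero a (mem_univ a)

variable [DecidableEq α]

/-- The coupling of `μ` and `ν` that puts the common mass `min μ ν` on the diagonal and couples the
excesses `(μ - ν)⁺` and `(ν - μ)⁺` independently. If the total excess is zero, the second summand is
zero as it should be, whatever the value of the division. -/
noncomputable def maximalCoupling (μ ν : α → ℝ) (p : α × α) : ℝ :=
  (if p.1 = p.2 then μ p.1 ⊓ ν p.1 else 0) +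
    (μ p.1 - ν p.1)⁺ * (ν p.2 - μ p.2)⁺ / ∑ a, (μ a - ν a)⁺

lemma maximalCoupling_swap (h : ∑ a, μ a = ∑ a, ν a) (a b : α) :
    maximalCoupling μ ν (a, b) = maximalCoupling ν μ (b, a) := by
  simp only [maximalCoupling, sum_posPart_sub_comm h, eq_comm (a := a)]
  rw [mul_comm]
  split_ifs with hab
  · rw [hab, inf_comm]
  · rfl

lemma maximalCoupling_nonneg (hμ : 0 ≤ μ) (hν : 0 ≤ ν) : 0 ≤ maximalCoupling μ ν := by
  intro p
  refine add_nonneg ?_ (div_nonneg (mul_nonneg (posPart_nonneg _) (posPart_nonneg _))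
    (sum_nonneg fun a _ ↦ posPart_nonneg _))
  split_ifs
  exacts [le_inf (hμ _) (hν _), le_rfl]

lemma sum_maximalCoupling_right (h : ∑ a, μ a = ∑ a, ν a) (a : α) :
    ∑ b, maximalCoupling μ ν (a, b) = μ a := by
  simp only [maximalCoupling, sum_add_distrib, sum_excess_mul_excess_div h, sum_ite_eq,
    mem_univ, if_true]
  rw [inf_eq_sub_posPart_sub, sub_add_cancel]

theorem isCoupling_maximalCoupling (hμ : 0 ≤ μ) (hν : 0 ≤ ν) (h : ∑ a, μ a = ∑ a, ν a) :
    IsCoupling μ ν (maximalCoupling μ ν) where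
  nonneg := maximalCoupling_nonneg hμ hν
  fst := by
    ext a
    rw [pushforward_fst_apply, sum_maximalCoupling_right h]
  snd := by
    ext b
    simp only [pushforward_snd_apply, maximalCoupling_swap h, sum_maximalCoupling_right h.symm]

theorem sum_maximalCoupling_ne (h : ∑ a, μ a = ∑ a, ν a) :
    ∑ p with p.1 ≠ p.2, maximalCoupling μ ν p = ∑ a, (μ a - ν a)⁺ := by
  have hoff (a b : α) : (if a ≠ b then maximalCoupling μ ν (a, b) else 0) =
      (μ a - ν a)⁺ * (ν b - μ b)⁺ / ∑ c, (μ c - ν c)⁺ := by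
    by_cases hab : a = b
    · have hdisjoint : (μ b - ν b)⁺ * (ν b - μ b)⁺ = 0 := by
        rcases le_total (μ b) (ν b) with hle | hle
        · rw [posPart_of_nonpos (sub_nonpos.mpr hle), zero_mul]
        · rw [posPart_of_nonpos (sub_nonpos.mpr hle), mul_zero]
      rw [hab, hdisjoint, zero_div, if_neg (not_not.mpr rfl)]
    · simp only [maximalCoupling, ne_eq, hab, not_false_eq_true, if_true, if_false, zero_add]
  rw [sum_filter, Fintype.sum_prod_type]
  simp only [hoff, sum_excess_mul_excess_div h]

end MaximalCoupling

section UniformWeight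

variable {α : Type*} [DecidableEq α] (S T : Finset α)

/-- The uniform probability vector on `S`, and the zero vector if `S` is empty. -/
noncomputable def uniformWeight (a : α) : ℝ := if a ∈ S then 1 / (#S : ℝ) else 0

lemma uniformWeight_nonneg : 0 ≤ uniformWeight S := by
  intro a
  unfold uniformWeight
  split_ifs <;> positivity

lemma posPart_uniformWeight_sub (h : #T ≤ #S) (a : α) :
    (uniformWeight S a - uniformWeight T a)⁺ = if a ∈ S \ T then 1 / (#S : ℝ) else 0 := by
  by_cases haT : a ∈ T
  · have hle : uniformWeight S a ≤ uniformWeight T a := by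
      have hT : (0 : ℝ) < #T := by exact_mod_cast card_pos.mpr ⟨a, haT⟩
      unfold uniformWeight
      rw [if_pos haT]
      split_ifs
      · gcongr
      · positivity
    rw [posPart_of_nonpos (sub_nonpos.mpr hle), if_neg fun ha ↦ (mem_sdiff.mp ha).2 haT]
  · have hT : uniformWeight T a = 0 := if_neg haT
    rw [hT, sub_zero, posPart_of_nonneg (uniformWeight_nonneg S a)]
    simp only [uniformWeight, mem_sdiff, haT, not_false_eq_true, and_true]

variable [Fintype α] {S T}

lemma sum_uniformWeight (hS : S.Nonempty) : ∑ a, uniformWeight S a = 1 := by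
  have hcard : (#S : ℝ) ≠ 0 := by exact_mod_cast hS.card_ne_zero
  simp only [uniformWeight, sum_ite_mem, univ_inter, sum_const, nsmul_eq_mul]
  exact mul_one_div_cancel hcard

lemma sum_posPart_uniformWeight_sub (hS : S.Nonempty) (hT : T.Nonempty) :
    ∑ a, (uniformWeight S a - uniformWeight T a)⁺ =
      (max #(S \ T) #(T \ S) : ℕ) / (max #S #T : ℕ) := by
  wlog h : #T ≤ #S generalizing S T
  · rw [sum_posPart_sub_comm ((sum_uniformWeight hS).trans (sum_uniformWeight hT).symm),
      this hT hS (le_of_not_ge h), max_comm, max_comm #S]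
  · rw [max_eq_left (card_sdiff_le_card_sdiff_iff.mpr h), max_eq_left h]
    simp only [posPart_uniformWeight_sub S T h, sum_ite_mem, univ_inter, sum_const, nsmul_eq_mul,
      mul_one_div]

theorem isCoupling_maximalCoupling_uniformWeight (hS : S.Nonempty) (hT : T.Nonempty) :
    IsCoupling (uniformWeight S) (uniformWeight T)
      (maximalCoupling (uniformWeight S) (uniformWeight T)) :=
  isCoupling_maximalCoupling (uniformWeight_nonneg S) (uniformWeight_nonneg T)
    ((sum_uniformWeight hS).trans (sum_uniformWeight hT).symm)

theorem sum_maximalCoupling_uniformWeight_ne (hS : S.Nonempty) (hT : T.Nonempty) :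
    ∑ p with p.1 ≠ p.2, maximalCoupling (uniformWeight S) (uniformWeight T) p =
      (max #(S \ T) #(T \ S) : ℕ) / (max #S #T : ℕ) := by
  rw [sum_maximalCoupling_ne ((sum_uniformWeight hS).trans (sum_uniformWeight hT).symm),
    sum_posPart_uniformWeight_sub hS hT]

end UniformWeight

section HammingDist

variable {V : Type*} [Fintype V] [DecidableEq V]

lemma hammingDist_update_add {K : V → Type*} [∀ v, DecidableEq (K v)] (X Y : ∀ v, K v) (v : V)
    (c d : K v) :
    hammingDist (update X v c) (update Y v d) + (if X v ≠ Y v then 1 else 0) =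
      hammingDist X Y + (if c ≠ d then 1 else 0) := by
  have hrest : ∑ u ∈ univ.erase v, (if update X v c u ≠ update Y v d u then 1 else 0) =
      ∑ u ∈ univ.erase v, (if X u ≠ Y u then 1 else 0) := by
    refine sum_congr rfl fun u hu ↦ ?_
    rw [update_of_ne (ne_of_mem_erase hu), update_of_ne (ne_of_mem_erase hu)]
  simp only [hammingDist, card_filter]
  rw [← add_sum_erase _ _ (mem_univ v), hrest, update_self, update_self,
    ← add_sum_erase univ (fun u ↦ if X u ≠ Y u then 1 else 0) (mem_univ v)]
  ring

variable {K : Type*} [Fintype K] [DecidableEq K]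

lemma sum_mul_hammingDist_update (X Y : V → K) (v : V) {π : K × K → ℝ} (hπ : ∑ p, π p = 1) :
    ∑ p, π p * hammingDist (update X v p.1) (update Y v p.2) =
      hammingDist X Y - (if X v ≠ Y v then 1 else 0) + ∑ p with p.1 ≠ p.2, π p := by
  have hdist (p : K × K) : (hammingDist (update X v p.1) (update Y v p.2) : ℝ) =
      hammingDist X Y - (if X v ≠ Y v then 1 else 0) + (if p.1 ≠ p.2 then 1 else 0) := by
    have h := congrArg (Nat.cast (R := ℝ)) (hammingDist_update_add X Y v p.1 p.2)
    push_cast at h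
    linarith
  simp only [hdist, mul_add, sum_add_distrib]
  rw [← sum_mul, hπ, one_mul, sum_filter]
  simp only [mul_ite, mul_one, mul_zero]

end HammingDist

lemma sum_one_div_le_of_card_le {ι : Type*} {s : Finset ι} {f : ι → ℝ} {d : ℕ} {t : ℝ} (ht : 0 < t)
    (hs : #s ≤ d) (hf : ∀ i ∈ s, d / t ≤ f i) : ∑ i ∈ s, 1 / f i ≤ t := by
  rcases s.eq_empty_or_nonempty with rfl | hne
  · exact sum_empty.trans_le ht.le
  have hd : (0 : ℝ) < d := by exact_mod_cast hne.card_pos.trans_le hs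
  have hterm : ∀ i ∈ s, 1 / f i ≤ t / d := fun i hi ↦
    (one_div_le_one_div_of_le (div_pos hd ht) (hf i hi)).trans_eq (one_div_div _ _)
  calc ∑ i ∈ s, 1 / f i ≤ #s • (t / d) := sum_le_card_nsmul s _ _ hterm
    _ ≤ d * (t / d) := by rw [nsmul_eq_mul]; gcongr
    _ = t := mul_div_cancel₀ t hd.ne'

section Glauber

variable {V K : Type*} [Fintype V] [Fintype K] [DecidableEq K]
  (G : SimpleGraph V) [DecidableRel G.Adj]

/-- The set `A(X,v)` of colors that do not appear on the neighbors of `v`. -/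
def availableColors (X : V → K) (v : V) : Finset K :=
  {c | ∀ w ∈ G.neighborFinset v, X w ≠ c}

variable {G} in
lemma availableColors_nonempty {X : V → K} (hX : ∀ u v, G.Adj u v → X u ≠ X v) (v : V) :
    (availableColors G X v).Nonempty := by
  refine ⟨X v, mem_filter.mpr ⟨mem_univ _, fun w hw ↦ ?_⟩⟩
  exact (hX v w ((G.mem_neighborFinset v w).mp hw)).symm

lemma card_availableColors_sdiff_le (X Y : V → K) (v : V) :
    #(availableColors G X v \ availableColors G Y v) ≤ #{w ∈ G.neighborFinset v | X w ≠ Y w} := by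
  suffices hsub : availableColors G X v \ availableColors G Y v ⊆
      {w ∈ G.neighborFinset v | X w ≠ Y w}.image Y from (card_le_card hsub).trans card_image_le
  intro c hc
  simp only [availableColors, mem_sdiff, mem_filter, mem_univ, true_and, not_forall, not_not] at hc
  obtain ⟨hcX, w, hw, rfl⟩ := hc
  exact mem_image_of_mem Y (mem_filter.mpr ⟨hw, hcX w hw⟩)

lemma max_card_availableColors_sdiff_le (X Y : V → K) (v : V) :
    max #(availableColors G X v \ availableColors G Y v)
      #(availableColors G Y v \ availableColors G X v) ≤ #{w ∈ G.neighborFinset v | X w ≠ Y w} := by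
  refine max_le (card_availableColors_sdiff_le G X Y v) ?_
  simpa only [ne_comm] using card_availableColors_sdiff_le G Y X v

lemma sum_card_filter_neighborFinset_mul (p : V → Prop) [DecidablePred p] (f : V → ℝ) :
    ∑ v, #{w ∈ G.neighborFinset v | p w} * f v = ∑ w with p w, ∑ v ∈ G.neighborFinset w, f v := by
  simp only [← nsmul_eq_mul, ← sum_const]
  refine sum_comm' fun v w ↦ ?_
  simp only [mem_filter, mem_univ, true_and, G.mem_neighborFinset, G.adj_comm v w, and_comm]

/-- The maximal coupling of the uniform choices from `A(X,v)` and `A(Y,v)`. -/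
noncomputable def colorCoupling (X Y : V → K) (v : V) : K × K → ℝ :=
  maximalCoupling (uniformWeight (availableColors G X v)) (uniformWeight (availableColors G Y v))

variable {G} in
lemma sum_colorCoupling_ne_le {X Y : V → K} {v : V} (hX : (availableColors G X v).Nonempty)
    (hY : (availableColors G Y v).Nonempty) :
    ∑ p with p.1 ≠ p.2, colorCoupling G X Y v p ≤
      #{w ∈ G.neighborFinset v | X w ≠ Y w} * (1 / (#(availableColors G X v) : ℝ)) := by
  have hpos : (0 : ℝ) < #(availableColors G X v) := by exact_mod_cast hX.card_pos
  rw [colorCoupling, sum_maximalCoupling_uniformWeight_ne hX hY, mul_one_div]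
  exact div_le_div₀ (Nat.cast_nonneg _)
    (by exact_mod_cast max_card_availableColors_sdiff_le G X Y v) hpos
    (by exact_mod_cast le_max_left _ _)

variable [DecidableEq V]

/-- The one-step law of the Glauber dynamics from `X`. If some `A(X,v)` is empty this has total mass
less than one, since `uniformWeight ∅ = 0`; if `V` is empty it is zero. -/
noncomputable def glauberKernel (X : V → K) : (V → K) → ℝ :=
  (1 / (Fintype.card V : ℝ)) •
    ∑ v, pushforward (update X v) (uniformWeight (availableColors G X v))

lemma pushforward_update_uniformWeight (X Y : V → K) (v : V) (S : Finset K) :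
    pushforward (update X v) (uniformWeight S) Y =
      if (∀ w, w ≠ v → Y w = X w) ∧ Y v ∈ S then 1 / (#S : ℝ) else 0 := by
  have hupdate (c : K) : update X v c = Y ↔ Y v = c ∧ ∀ w, w ≠ v → Y w = X w := by
    rw [eq_comm, eq_update_iff]
  simp only [pushforward_apply, hupdate, sum_filter, ite_and, sum_ite_eq, mem_univ, if_true]
  rfl

lemma glauberKernel_apply (X Y : V → K) :
    glauberKernel G X Y = 1 / (Fintype.card V : ℝ) * ∑ v,
      if (∀ w, w ≠ v → Y w = X w) ∧ Y v ∈ availableColors G X v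
      then 1 / (#(availableColors G X v) : ℝ) else 0 := by
  simp only [glauberKernel, Pi.smul_apply, Finset.sum_apply, pushforward_update_uniformWeight,
    smul_eq_mul]

/-- The coupling of one Glauber step from `X` and from `Y` in which both chains update the same
vertex and draw the new colors from `colorCoupling`. -/
noncomputable def glauberCoupling (X Y : V → K) : (V → K) × (V → K) → ℝ :=
  (1 / (Fintype.card V : ℝ)) •
    ∑ v, pushforward (Prod.map (update X v) (update Y v)) (colorCoupling G X Y v)

variable {G} {X Y : V → K}

theorem isCoupling_glauberCoupling (hX : ∀ v, (availableColors G X v).Nonempty)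
    (hY : ∀ v, (availableColors G Y v).Nonempty) :
    IsCoupling (glauberKernel G X) (glauberKernel G Y) (glauberCoupling G X Y) :=
  (IsCoupling.sum fun v ↦
    (isCoupling_maximalCoupling_uniformWeight (hX v) (hY v)).map _ _).smul (by positivity)

lemma sum_glauberCoupling_mul_hammingDist (hX : ∀ v, (availableColors G X v).Nonempty)
    (hY : ∀ v, (availableColors G Y v).Nonempty) :
    ∑ p, glauberCoupling G X Y p * hammingDist p.1 p.2 =
      1 / (Fintype.card V : ℝ) * (Fintype.card V * hammingDist X Y - hammingDist X Y +
        ∑ v, ∑ p with p.1 ≠ p.2, colorCoupling G X Y v p) := by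
  have hone (v : V) : ∑ p, colorCoupling G X Y v p = 1 :=
    (isCoupling_maximalCoupling_uniformWeight (hX v) (hY v)).sum_eq.trans
      (sum_uniformWeight (hX v))
  have hdisagree : ∑ v, (if X v ≠ Y v then 1 else 0 : ℝ) = hammingDist X Y := sum_boole _ _
  simp only [glauberCoupling, Pi.smul_apply, Finset.sum_apply, smul_eq_mul, mul_assoc, ← mul_sum,
    sum_mul]
  rw [sum_comm]
  simp only [sum_pushforward_mul, Prod.map_fst, Prod.map_snd,
    sum_mul_hammingDist_update X Y _ (hone _), sum_add_distrib, sum_sub_distrib, hdisagree,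
    sum_const, card_univ, nsmul_eq_mul]

variable (X Y) in
/-- In `hβ`, the sum bounds the expected number of new disagreements caused by the one at `w`, up to
the factor `1 / n` for choosing the updated vertex. -/
theorem stmt_7_general (hX : ∀ v, (availableColors G X v).Nonempty)
    (hY : ∀ v, (availableColors G Y v).Nonempty) {β : ℝ}
    (hβ : ∀ w, X w ≠ Y w →
      ∑ v ∈ G.neighborFinset w, 1 / (#(availableColors G X v) : ℝ) ≤ 1 - β) :
    ∃ π, IsCoupling (glauberKernel G X) (glauberKernel G Y) π ∧
      ∑ p, π p * hammingDist p.1 p.2 ≤ (1 - β / Fintype.card V) * hammingDist X Y := by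
  refine ⟨glauberCoupling G X Y, isCoupling_glauberCoupling hX hY, ?_⟩
  have hcreated : ∑ v, ∑ p with p.1 ≠ p.2, colorCoupling G X Y v p ≤ hammingDist X Y * (1 - β) :=
    calc ∑ v, ∑ p with p.1 ≠ p.2, colorCoupling G X Y v p
      _ ≤ ∑ v, #{w ∈ G.neighborFinset v | X w ≠ Y w} * (1 / (#(availableColors G X v) : ℝ)) :=
        sum_le_sum fun v _ ↦ sum_colorCoupling_ne_le (hX v) (hY v)
      _ = ∑ w with X w ≠ Y w, ∑ v ∈ G.neighborFinset w, 1 / (#(availableColors G X v) : ℝ) :=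
        sum_card_filter_neighborFinset_mul G _ _
      _ ≤ hammingDist X Y * (1 - β) := by
        rw [← nsmul_eq_mul]
        exact sum_le_card_nsmul _ _ _ fun w hw ↦ hβ w (mem_filter.mp hw).2
  rw [sum_glauberCoupling_mul_hammingDist hX hY]
  calc 1 / (Fintype.card V : ℝ) * (Fintype.card V * hammingDist X Y - hammingDist X Y +
        ∑ v, ∑ p with p.1 ≠ p.2, colorCoupling G X Y v p)
    _ ≤ 1 / (Fintype.card V : ℝ) * (Fintype.card V * hammingDist X Y - hammingDist X Y +
        hammingDist X Y * (1 - β)) := by gcongr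
    _ = (Fintype.card V / Fintype.card V - β / Fintype.card V) * hammingDist X Y := by ring
    _ ≤ (1 - β / Fintype.card V) * hammingDist X Y := by
        gcongr
        exact div_self_le_one _

end Glauber

end

/-- **Most colorings are distance-decreasing** (Hayes–Vigoda, Lemma 2.3).
If the proper `k`-coloring `X` satisfies `|A(X,v)| ≥ Δ/(1-β)` for every vertex `v`,
then for every proper `k`-coloring `Y` there is a coupling of one step of the Glauber
dynamics from `X` and from `Y` under which the expected Hamming distance is at most
`(1 - β/n)·ρ(X,Y)`. -/
theorem stmt_7 {V : Type*} [Fintype V] [DecidableEq V]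
    (G : SimpleGraph V) [DecidableRel G.Adj]
    (n Δ k : ℕ) (hn : Fintype.card V = n)
    (hΔ : ∀ v, G.degree v ≤ Δ)
    (β : ℝ) (hβ0 : 0 < β) (hβ1 : β < 1)
    -- A(X,v): the set of colors not appearing in the neighborhood of v
    (A : (V → Fin k) → V → Finset (Fin k))
    (hA : ∀ X v, A X v = Finset.univ.filter fun c => ∀ w ∈ G.neighborFinset v, X w ≠ c)
    -- the Glauber transition kernel: pick v uniformly, recolor it uniformly from A(X,v)
    (P : (V → Fin k) → (V → Fin k) → ℝ)
    (hP : ∀ X Y, P X Y = (1 / (n : ℝ)) * ∑ v : V,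
      if (∀ w, w ≠ v → Y w = X w) ∧ Y v ∈ A X v
      then 1 / ((A X v).card : ℝ) else 0)
    -- the Hamming metric
    (ρ : (V → Fin k) → (V → Fin k) → ℕ)
    (hρ : ∀ X Y, ρ X Y = (Finset.univ.filter fun v => X v ≠ Y v).card)
    -- the pair of proper colorings
    (X Y : V → Fin k)
    (hX : ∀ u v, G.Adj u v → X u ≠ X v)
    (hY : ∀ u v, G.Adj u v → Y u ≠ Y v)
    (havail : ∀ v : V, ((A X v).card : ℝ) ≥ (Δ : ℝ) / (1 - β)) :
    ∃ ν : (V → Fin k) → (V → Fin k) → ℝ,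
      (∀ a b, 0 ≤ ν a b) ∧
      (∀ a, ∑ b, ν a b = P X a) ∧
      (∀ b, ∑ a, ν a b = P Y b) ∧
      (∑ a, ∑ b, ν a b * (ρ a b : ℝ)) ≤ (1 - β / (n : ℝ)) * (ρ X Y : ℝ) := by
  obtain rfl : A = availableColors G := by
    ext
    simp only [hA, availableColors, Finset.mem_filter]
  obtain rfl : ρ = fun a b ↦ hammingDist a b := funext₂ hρ
  subst hn
  obtain rfl : P = glauberKernel G :=
    funext₂ fun a b ↦ (hP a b).trans (glauberKernel_apply G a b).symm
  have hcharge (w : V) :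
      ∑ v ∈ G.neighborFinset w, 1 / ((availableColors G X v).card : ℝ) ≤ 1 - β :=
    sum_one_div_le_of_card_le (sub_pos.mpr hβ1) (hΔ w) fun v _ ↦ havail v
  obtain ⟨π, hπ, hdist⟩ := stmt_7_general X Y (availableColors_nonempty hX)
    (availableColors_nonempty hY) fun w _ ↦ hcharge w
  refine ⟨fun a b ↦ π (a, b), fun a b ↦ hπ.nonneg (a, b), fun a ↦ ?_, fun b ↦ ?_, ?_⟩
  · rw [← pushforward_fst_apply, hπ.fst]
  · rw [← pushforward_snd_apply, hπ.snd]
  · rwa [Fintype.sum_prod_type] at hdist
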